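/- Let L₁ and L₂ be nontrivial finite transitive permutation groups of degrees m₁ and m₂, and suppose L₁ is not semiprimitive, witnessed by a normal subgroup K ⊴ L₁ (equal to the kernel of the L₁-action on the K-orbit set) that is neither transitive nor semiregular, with point stabiliser K_λ of order ≥ 2 and orbit set Δ. Then for every positive integer ℓ, the amalgam constructed from the groups P₁ = A ⋊ R₁ and P₂ = C ⋊ R over B = C ⋊ R₁ (as in the paper, with m = ℓ·m₂) is a rank-2 faithful amalgam of permutation type [L₁, L₂] whose Borel subgroup B satisfies |B| ≥ |C| ≥ |K_λ|^{|Δ|·ℓ·m₂} ≥ 2^{|Δ|·ℓ·m₂}. Consequently, [L₁, L₂] admits rank-2 faithful amalgams of permutation type [L₁, L₂] with Borel subgroups of unbounded order. -/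

import Mathlib

/-! The amalgam is built from a wreath-like extension of `L₁`. Write `Δ` for the set of `K`-orbits
and choose a representative `p δ` in each. For an index set `X`, let `A` consist of an element
`g : L₁` together with elements `f i δ ∈ gK` (`i : X`, `δ : Δ`) taking `p δ` to `p (g • δ)`, with
the multiplication of a wreath product. Projection to `g` makes `A` act on `Ω₁` as `L₁`; let `C` be
the stabiliser of the point `p d`. For an element of `C` the entries `f i d` and `g` satisfy the
same conditions (they fix `p d` and agree modulo `K`), and all of them permute `Δ` in the same way.
Hence any permutation of the `|X| + 1` entries at `d` (indexed by `Option X`, with `none` standing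
for `g`) combined with any independent permutation of `X` at the remaining blocks is an automorphism
of `C` (`BlockExt.shuffleHom`), whereas on `A` only the permutations of `X` are available
(`BlockExt.reindex`).

Let `L₂` act on `C` through homomorphisms `α` (at `d`) and `β` (elsewhere) which agree on the
stabiliser `R₁` of a point `w : Ω₂`. Then `P₁ = A ⋊ R₁`, `P₂ = C ⋊ L₂` and `B = C ⋊ R₁` form an
amalgam of type `[L₁, L₂]`. It is faithful as soon as `none` can be joined to every index using `α`
and `β` (`BlockExt.faithful`): a subgroup of `B` normal on both sides is trivial at `none`, the
group `A` transports triviality between blocks, and `L₂` transports it between indices. With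
`X = Ω₂ × Fin ℓ`, the action `β` on the first factor, and `α` its conjugate by a cycle through
`none` and the column of `w`, this holds (`exists_actions`). Finally, each of the `|Δ| · ℓ · m₂`
entries of an element of `C` with `g = 1` ranges over the nontrivial stabiliser of `p δ` in `K`
(`BlockExt.two_pow_le_card`). -/

section Construction

/-! ### The groups `A` and `C` -/

open MulAction

/-- A system of representatives for a block system: `L` acts on the set of points `Ω` and on the
set of blocks `Δ`, `p δ` is a chosen point of the block `δ`, and the normal subgroup `K` fixes
every block and is transitive on the points of each block. -/
structure BlockRep {L Ω Δ : Type} [Group L] [MulAction L Ω] [MulAction L Δ]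
    (K : Subgroup L) (p : Δ → Ω) : Prop where
  triv : ∀ k ∈ K, ∀ δ : Δ, k • δ = δ
  stab : ∀ (g : L) (δ : Δ), g • p δ = p δ → g • δ = δ
  trans : ∀ (g : L) (δ : Δ), ∃ k ∈ K, k • g • p δ = p (g • δ)

/-- The group `A`. An element is a `g : L` together with, for each index `i : X` and
each block `δ`, an element of the coset `gK` taking the representative of `δ` to the
representative of `g • δ`. -/
@[ext] structure BlockExt {L Ω Δ : Type} [Group L] [MulAction L Ω] [MulAction L Δ]
    (K : Subgroup L) (p : Δ → Ω) (X : Type) where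
  g : L
  f : X → Δ → L
  mem : ∀ i δ, g⁻¹ * f i δ ∈ K
  fix : ∀ i δ, f i δ • p δ = p (g • δ)

/-- Permutations of `X` as permutations of `Option X` fixing `none`. -/
def optHom (X : Type) : Equiv.Perm X →* Equiv.Perm (Option X) where
  toFun τ := τ.optionCongr
  map_one' := by ext x; cases x <;> simp
  map_mul' σ τ := by ext x; cases x <;> simp

/-- If `P` acts on `Ω` through `ψ` and `S` is a point stabiliser, then `P ⧸ S` and `Ω` are
equivalent `P`-sets. -/
lemma exists_coset_equiv {P L Ω : Type} [Group P] [Group L] [MulAction L Ω] [IsPretransitive L Ω]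
    (ψ : P →* L) (hψ : Function.Surjective ψ) (S : Subgroup P) (x : Ω)
    (h : ∀ q, q ∈ S ↔ ψ q • x = x) :
    ∃ e : (P ⧸ S) ≃ Ω, ∀ (q : P) (y : P ⧸ S), e (q • y) = ψ q • e y := by
  let _ : MulAction P Ω := MulAction.compHom Ω ψ
  have hs : S = stabilizer P x := by
    ext q
    rw [h]
    rfl
  subst hs
  have : IsPretransitive P Ω := ⟨fun a b => by
    obtain ⟨l, hl⟩ := exists_smul_eq L a b
    obtain ⟨q, rfl⟩ := hψ l
    exact ⟨q, hl⟩⟩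
  refine ⟨Equiv.ofBijective (ofQuotientStabilizer P x)
    ⟨injective_ofQuotientStabilizer P x, fun y => ?_⟩, fun q y => ofQuotientStabilizer_smul _ _ _ _⟩
  obtain ⟨q, hq⟩ := exists_smul_eq P x y
  exact ⟨q, hq⟩

/-- A subgroup normal in `P` and contained in a point stabiliser of a faithful transitive image of
`P` lies in the kernel. -/
lemma eq_one_of_normal {P L Ω : Type} [Group P] [Group L] [MulAction L Ω] [IsPretransitive L Ω]
    [FaithfulSMul L Ω] (ψ : P →* L) (hψ : Function.Surjective ψ) (N : Subgroup P) (hN : N.Normal)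
    (x : Ω) (h : ∀ q ∈ N, ψ q • x = x) (q : P) (hq : q ∈ N) : ψ q = 1 := by
  apply FaithfulSMul.eq_of_smul_eq_smul (α := Ω)
  intro y
  obtain ⟨l, rfl⟩ := exists_smul_eq L x y
  obtain ⟨u, rfl⟩ := hψ l
  have := h _ (hN.conj_mem q hq u⁻¹)
  simp only [map_mul, map_inv, inv_inv, mul_smul] at this
  rw [inv_smul_eq_iff] at this
  rw [this, one_smul]

namespace BlockExt

variable {L Ω Δ : Type} [Group L] [MulAction L Ω] [MulAction L Δ] {K : Subgroup L} {p : Δ → Ω}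
  {X : Type}

instance [K.Normal] : Mul (BlockExt K p X) where
  mul a b :=
    { g := a.g * b.g
      f := fun i δ => a.f i (b.g • δ) * b.f i δ
      mem := fun i δ => by
        have h1 := (inferInstance : K.Normal).conj_mem _ (a.mem i (b.g • δ)) b.g⁻¹
        have h2 := K.mul_mem h1 (b.mem i δ)
        convert h2 using 1
        group
      fix := fun i δ => by rw [mul_smul, b.fix, a.fix, mul_smul] }

instance : One (BlockExt K p X) where
  one := { g := 1, f := fun _ _ => 1, mem := by simp, fix := by simp }

@[simp] lemma one_g : (1 : BlockExt K p X).g = 1 := rfl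
@[simp] lemma one_f (i : X) (δ : Δ) : (1 : BlockExt K p X).f i δ = 1 := rfl

instance [K.Normal] : Inv (BlockExt K p X) where
  inv a :=
    { g := a.g⁻¹
      f := fun i δ => (a.f i (a.g⁻¹ • δ))⁻¹
      mem := fun i δ => by
        have h1 := (inferInstance : K.Normal).conj_mem _ (K.inv_mem (a.mem i (a.g⁻¹ • δ))) a.g
        convert h1 using 1
        group
      fix := fun i δ => by rw [inv_smul_eq_iff, a.fix, smul_inv_smul] }

lemma finite [Finite L] [Finite X] [Finite Δ] : Finite (BlockExt K p X) :=
  Finite.of_injective (fun a => (a.g, a.f)) fun a b h => by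
    ext1
    · exact congrArg Prod.fst h
    · exact congrArg Prod.snd h

/-- The coordinates of an element, where the component `g` counts as the coordinate `none`. -/
def ev (a : BlockExt K p X) : Option X → Δ → L
  | none, _ => a.g
  | some i, δ => a.f i δ

lemma ev_mem (a : BlockExt K p X) (j : Option X) (δ : Δ) : a.g⁻¹ * ev a j δ ∈ K := by
  cases j with
  | none => simp [ev, K.one_mem]
  | some i => exact a.mem i δ

variable [K.Normal]

@[simp] lemma mul_g (a b : BlockExt K p X) : (a * b).g = a.g * b.g := rfl
@[simp] lemma mul_f (a b : BlockExt K p X) (i : X) (δ : Δ) :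
    (a * b).f i δ = a.f i (b.g • δ) * b.f i δ := rfl
@[simp] lemma inv_g (a : BlockExt K p X) : (a⁻¹).g = a.g⁻¹ := rfl
@[simp] lemma inv_f (a : BlockExt K p X) (i : X) (δ : Δ) : (a⁻¹).f i δ = (a.f i (a.g⁻¹ • δ))⁻¹ := rfl

instance : Group (BlockExt K p X) :=
  Group.ofLeftAxioms
    (fun a b c => by
      ext i δ
      · simp [mul_assoc]
      · simp [mul_assoc, mul_smul])
    (fun a => by ext <;> simp)
    (fun a => by ext <;> simp)

/-- The projection of `A` to `L` is surjective. -/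
lemma exists_g (H : BlockRep K p) (g : L) : ∃ a : BlockExt K p X, a.g = g := by
  choose k hk hk' using H.trans g
  refine ⟨⟨g, fun _ δ => k δ * g, fun _ δ => ?_, fun _ δ => by rw [mul_smul, hk']⟩, rfl⟩
  have := (inferInstance : K.Normal).conj_mem _ (hk δ) g⁻¹
  rwa [inv_inv, mul_assoc] at this

/-- Reindexing the indices `X` by automorphisms of `BlockExt K p X`. -/
def reindex (K : Subgroup L) [K.Normal] (p : Δ → Ω) (X : Type) :
    Equiv.Perm X →* MulAut (BlockExt K p X) where
  toFun τ :=
    { toFun a := ⟨a.g, fun i δ => a.f (τ⁻¹ i) δ, fun i δ => a.mem _ _, fun i δ => a.fix _ _⟩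
      invFun a := ⟨a.g, fun i δ => a.f (τ i) δ, fun i δ => a.mem _ _, fun i δ => a.fix _ _⟩
      left_inv a := by ext <;> simp
      right_inv a := by ext <;> simp
      map_mul' a b := by ext <;> simp }
  map_one' := by ext <;> simp
  map_mul' σ τ := by ext <;> simp

@[simp] lemma reindex_g (τ : Equiv.Perm X) (a : BlockExt K p X) : (reindex K p X τ a).g = a.g := rfl
@[simp] lemma reindex_f (τ : Equiv.Perm X) (a : BlockExt K p X) (i : X) (δ : Δ) :
    (reindex K p X τ a).f i δ = a.f (τ⁻¹ i) δ := rfl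

/-- The projection of `A ⋊ S` to `L`, when `S` acts on `A` by reindexing. -/
def proj {S : Type} [Group S] (ρ : S →* Equiv.Perm X) :
    BlockExt K p X ⋊[(reindex K p X).comp ρ] S →* L where
  toFun q := q.left.g
  map_one' := rfl
  map_mul' _ _ := rfl

lemma mem_ev (a : BlockExt K p X) (j : Option X) (δ : Δ) : (ev a j δ)⁻¹ * a.g ∈ K := by
  have := K.inv_mem (ev_mem a j δ)
  rwa [mul_inv_rev, inv_inv] at this

lemma ev_smul (H : BlockRep K p) (a : BlockExt K p X) (j : Option X) (δ δ' : Δ) :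
    ev a j δ • δ' = a.g • δ' := by
  have := H.triv _ (ev_mem a j δ) δ'
  rwa [mul_smul, inv_smul_eq_iff] at this

/-- The group `C`, the stabiliser in `A` of the point `p d`. -/
def pstab (K : Subgroup L) [K.Normal] (p : Δ → Ω) (X : Type) (d : Δ) :
    Subgroup (BlockExt K p X) where
  carrier := {a | a.g • p d = p d}
  one_mem' := by simp
  mul_mem' {a b} ha hb := by
    change (a * b).g • p d = p d
    rw [mul_g, mul_smul, show b.g • p d = p d from hb, show a.g • p d = p d from ha]
  inv_mem' {a} ha := by
    change a⁻¹.g • p d = p d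
    rw [inv_g, inv_smul_eq_iff, show a.g • p d = p d from ha]

variable {d : Δ}

lemma mem_pstab {a : BlockExt K p X} : a ∈ pstab K p X d ↔ a.g • p d = p d := Iff.rfl

/-- For `a ∈ C` the coordinates at `d` are all of the same kind, including the coordinate `none`. -/
lemma ev_fix (H : BlockRep K p) (a : pstab K p X d) (j : Option X) :
    ev a.1 j d • p d = p d := by
  have ha := mem_pstab.1 a.2
  cases j with
  | none => exact ha
  | some i =>
    change a.1.f i d • p d = p d
    rw [a.1.fix, H.stab _ _ ha]

lemma ev_mul (H : BlockRep K p) (a b : pstab K p X d) (j : Option X) :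
    ev (a * b : pstab K p X d).1 j d = ev a.1 j d * ev b.1 j d := by
  cases j with
  | none => rfl
  | some i =>
    change a.1.f i (b.1.g • d) * b.1.f i d = a.1.f i d * b.1.f i d
    rw [H.stab _ _ (mem_pstab.1 b.2)]

lemma pstab_ext {a b : pstab K p X d} (h : ∀ j, ev a.1 j d = ev b.1 j d)
    (h' : ∀ i δ, δ ≠ d → a.1.f i δ = b.1.f i δ) : a = b := by
  apply Subtype.ext
  ext i δ
  · exact h none
  · by_cases hδ : δ = d
    · subst hδ
      exact h (some i)
    · exact h' i δ hδ

open Classical in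
/-- Permuting by `σ` the coordinates at `d` (including `none`), and independently by `τ` the
coordinates at all other blocks. -/
noncomputable def shuffle (H : BlockRep K p) (d : Δ) (σ : Equiv.Perm (Option X))
    (τ : Equiv.Perm X) (a : pstab K p X d) : pstab K p X d :=
  ⟨{ g := ev a.1 (σ⁻¹ none) d
     f := fun i δ => if δ = d then ev a.1 (σ⁻¹ (some i)) d else a.1.f (τ⁻¹ i) δ
     mem := fun i δ => by
       have h1 := mem_ev a.1 (σ⁻¹ none) d
       split_ifs
       · have := K.mul_mem h1 (ev_mem a.1 (σ⁻¹ (some i)) d)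
         convert this using 1
         group
       · have := K.mul_mem h1 (a.1.mem (τ⁻¹ i) δ)
         convert this using 1
         group
     fix := fun i δ => by
       rw [ev_smul H]
       split_ifs with h
       · subst h
         rw [ev_fix H, H.stab _ _ (mem_pstab.1 a.2)]
       · rw [a.1.fix] }, ev_fix H a _⟩

lemma ev_shuffle (H : BlockRep K p) (σ : Equiv.Perm (Option X)) (τ : Equiv.Perm X)
    (a : pstab K p X d) (j : Option X) :
    ev (shuffle H d σ τ a).1 j d = ev a.1 (σ⁻¹ j) d := by
  cases j with
  | none => rfl
  | some i => simp [ev, shuffle]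

lemma f_shuffle (H : BlockRep K p) (σ : Equiv.Perm (Option X)) (τ : Equiv.Perm X)
    (a : pstab K p X d) (i : X) (δ : Δ) (h : δ ≠ d) :
    (shuffle H d σ τ a).1.f i δ = a.1.f (τ⁻¹ i) δ := by
  simp [shuffle, h]

lemma shuffle_mul (H : BlockRep K p) (σ : Equiv.Perm (Option X)) (τ : Equiv.Perm X)
    (a b : pstab K p X d) :
    shuffle H d σ τ (a * b) = shuffle H d σ τ a * shuffle H d σ τ b := by
  apply pstab_ext
  · intro j
    rw [ev_mul H, ev_shuffle, ev_shuffle, ev_shuffle, ev_mul H]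
  · intro i δ hδ
    have hb : b.1.g • δ ≠ d := fun h => hδ (by
      have hd := H.stab _ _ (mem_pstab.1 b.2)
      exact smul_left_cancel b.1.g (h.trans hd.symm))
    have hs : (shuffle H d σ τ b).1.g • δ = b.1.g • δ := ev_smul H _ _ _ _
    rw [f_shuffle _ _ _ _ _ _ hδ, Subgroup.coe_mul, Subgroup.coe_mul, mul_f, mul_f, hs,
      f_shuffle _ _ _ _ _ _ hδ, f_shuffle _ _ _ _ _ _ hb]

lemma shuffle_one (H : BlockRep K p) (a : pstab K p X d) : shuffle H d 1 1 a = a :=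
  pstab_ext (fun j => by rw [ev_shuffle]; rfl) fun i δ h => by rw [f_shuffle _ _ _ _ _ _ h]; rfl

lemma shuffle_shuffle (H : BlockRep K p) (σ σ' : Equiv.Perm (Option X)) (τ τ' : Equiv.Perm X)
    (a : pstab K p X d) :
    shuffle H d (σ * σ') (τ * τ') a = shuffle H d σ τ (shuffle H d σ' τ' a) := by
  apply pstab_ext
  · intro j
    simp only [ev_shuffle, mul_inv_rev, Equiv.Perm.mul_apply]
  · intro i δ h
    simp only [f_shuffle _ _ _ _ _ _ h, mul_inv_rev, Equiv.Perm.mul_apply]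

/-- The permutations of coordinates as automorphisms of `C`. -/
noncomputable def shuffleHom (H : BlockRep K p) (d : Δ) :
    Equiv.Perm (Option X) × Equiv.Perm X →* MulAut (pstab K p X d) where
  toFun s :=
    { toFun := shuffle H d s.1 s.2
      invFun := shuffle H d s.1⁻¹ s.2⁻¹
      left_inv a := by rw [← shuffle_shuffle, inv_mul_cancel, inv_mul_cancel, shuffle_one]
      right_inv a := by rw [← shuffle_shuffle, mul_inv_cancel, mul_inv_cancel, shuffle_one]
      map_mul' := shuffle_mul H s.1 s.2 }
  map_one' := MulEquiv.ext (shuffle_one H)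
  map_mul' s u := MulEquiv.ext (shuffle_shuffle H s.1 u.1 s.2 u.2)

/-- On permutations of `X` alone, shuffling `C` is the restriction of reindexing `A`. -/
lemma shuffle_optHom (H : BlockRep K p) (τ : Equiv.Perm X) (a : pstab K p X d) :
    (shuffle H d (optHom X τ) τ a).1 = reindex K p X τ a.1 := by
  have hr : (reindex K p X τ a.1) ∈ pstab K p X d := a.2
  have : shuffle H d (optHom X τ) τ a = ⟨_, hr⟩ := by
    apply pstab_ext
    · intro j
      rw [ev_shuffle]
      cases j <;> rfl
    · intro i δ h
      rw [f_shuffle _ _ _ _ _ _ h]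
      rfl
  rw [this]

/-- Every function assigning to each index and block an element of `K` fixing the representative
gives an element of `C`. -/
lemma two_pow_le_card [Finite L] [Finite X] [Finite Δ]
    (hK : ∀ δ, ∃ k ∈ K, k • p δ = p δ ∧ k ≠ 1) :
    2 ^ (Nat.card Δ * Nat.card X) ≤ Nat.card (pstab K p X d) := by
  choose k hk hf h1 using hK
  have hfin : Finite (BlockExt K p X) := finite
  let F : (X → Δ → Bool) → pstab K p X d := fun b =>
    ⟨⟨1, fun i δ => if b i δ then k δ else 1,
      fun i δ => by
        split_ifs
        · simpa using hk δ
        · simp [K.one_mem],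
      fun i δ => by
        split_ifs
        · simpa using hf δ
        · simp⟩, by simp [mem_pstab]⟩
  have hF : Function.Injective F := by
    intro b b' h
    ext i δ
    have h' : (if b i δ then k δ else 1) = (if b' i δ then k δ else 1) :=
      congrArg (fun a : pstab K p X d => a.1.f i δ) h
    have := h1 δ
    have := (h1 δ).symm
    cases hb : b i δ <;> cases hb' : b' i δ <;> simp_all
  have := Nat.card_le_card_of_injective F hF
  rwa [Nat.card_fun, Nat.card_fun, Nat.card_eq_fintype_card (α := Bool), Fintype.card_bool,
    ← pow_mul] at this

end BlockExt

/-! ### The amalgam and its faithfulness -/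

section Amalgam

variable {L Ω Δ : Type} [Group L] [MulAction L Ω] [MulAction L Δ] {K : Subgroup L} [K.Normal]
  {p : Δ → Ω} {X R Ω' : Type} [Group R] [MulAction R Ω']

namespace BlockExt

/-- The action of `R` on `C`, through permutations `α` of the coordinates at `d` and permutations
`β` of the other coordinates. -/
noncomputable def act (H : BlockRep K p) (d : Δ) (α : R →* Equiv.Perm (Option X))
    (β : R →* Equiv.Perm X) : R →* MulAut (pstab K p X d) :=
  (shuffleHom H d).comp (α.prod β)

lemma act_apply (H : BlockRep K p) (d : Δ) (α : R →* Equiv.Perm (Option X))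
    (β : R →* Equiv.Perm X) (r : R) (a : pstab K p X d) :
    act H d α β r a = shuffle H d (α r) (β r) a := rfl

/-- The inclusion of `B = C ⋊ S` in `P₁ = A ⋊ S`. -/
noncomputable def incl₁ (H : BlockRep K p) (d : Δ) (α : R →* Equiv.Perm (Option X))
    (β : R →* Equiv.Perm X) (S : Subgroup R) (hS : ∀ r ∈ S, α r = optHom X (β r)) :
    pstab K p X d ⋊[(act H d α β).comp S.subtype] S →*
      BlockExt K p X ⋊[(reindex K p X).comp (β.comp S.subtype)] S :=
  SemidirectProduct.map (pstab K p X d).subtype (MonoidHom.id S) fun r => by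
    ext1 a
    change (act H d α β r a).1 = reindex K p X (β r) a.1
    rw [act_apply, hS r r.2, shuffle_optHom]

/-- The inclusion of `B = C ⋊ S` in `P₂ = C ⋊ R`. -/
noncomputable def incl₂ (H : BlockRep K p) (d : Δ) (α : R →* Equiv.Perm (Option X))
    (β : R →* Equiv.Perm X) (S : Subgroup R) :
    pstab K p X d ⋊[(act H d α β).comp S.subtype] S →* pstab K p X d ⋊[act H d α β] R :=
  SemidirectProduct.map (MonoidHom.id _) S.subtype fun _ => rfl

variable (H : BlockRep K p) (d : Δ) (α : R →* Equiv.Perm (Option X))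
    (β : R →* Equiv.Perm X)

lemma incl₁_injective (S : Subgroup R) (hS : ∀ r ∈ S, α r = optHom X (β r)) :
    Function.Injective (incl₁ H d α β S hS) := by
  intro x y h
  have h1 := congrArg SemidirectProduct.left h
  have h2 := congrArg SemidirectProduct.right h
  exact SemidirectProduct.ext (Subtype.ext h1) h2

lemma incl₂_injective (S : Subgroup R) : Function.Injective (incl₂ H d α β S) := by
  intro x y h
  have h1 := congrArg SemidirectProduct.left h
  have h2 := congrArg SemidirectProduct.right h
  exact SemidirectProduct.ext h1 (Subtype.ext h2)

lemma mem_range_incl₁ (S : Subgroup R) (hS : ∀ r ∈ S, α r = optHom X (β r))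
    (q : BlockExt K p X ⋊[(reindex K p X).comp (β.comp S.subtype)] S) :
    q ∈ (incl₁ H d α β S hS).range ↔ proj (β.comp S.subtype) q • p d = p d := by
  constructor
  · rintro ⟨x, rfl⟩
    exact x.left.2
  · intro h
    exact ⟨⟨⟨q.left, h⟩, q.right⟩, rfl⟩

lemma mem_range_incl₂ (w : Ω') (q : pstab K p X d ⋊[act H d α β] R) :
    q ∈ (incl₂ H d α β (stabilizer R w)).range ↔ SemidirectProduct.rightHom q • w = w := by
  constructor
  · rintro ⟨x, rfl⟩
    exact x.right.2
  · intro h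
    exact ⟨⟨q.left, ⟨q.right, h⟩⟩, rfl⟩

lemma proj_surjective (H : BlockRep K p) (β : R →* Equiv.Perm X) (S : Subgroup R) :
    Function.Surjective (proj (K := K) (p := p) (β.comp S.subtype)) := by
  intro l
  obtain ⟨a, ha⟩ := exists_g (X := X) H l
  exact ⟨SemidirectProduct.inl a, ha⟩

/-- Faithfulness. An element of a subgroup `N` normal on both sides has trivial component in `R`
and trivial coordinate `none`. Conjugation by `A` and the two actions of `R` carry the vanishing
of a coordinate over to the other ones, and `hconn` says that all of them are reached. -/
theorem faithful [IsPretransitive L Ω] [FaithfulSMul L Ω] [IsPretransitive R Ω']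
    [FaithfulSMul R Ω'] [IsPretransitive L Δ] [Nontrivial Δ] (w : Ω')
    (hS : ∀ r ∈ stabilizer R w, α r = optHom X (β r))
    (hconn : ∀ T : Set (Option X), none ∈ T → (∀ r i, i ∈ T → α r i ∈ T) →
      (∀ r i, some i ∈ T → some (β r i) ∈ T) → ∀ i, i ∈ T)
    (N : Subgroup (pstab K p X d ⋊[(act H d α β).comp (stabilizer R w).subtype] stabilizer R w))
    (hN₁ : (N.map (incl₁ H d α β _ hS)).Normal)
    (hN₂ : (N.map (incl₂ H d α β (stabilizer R w))).Normal) : N = ⊥ := by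
  have hright : ∀ n ∈ N, n.right = 1 := by
    intro n hn
    have := eq_one_of_normal (Ω := Ω') SemidirectProduct.rightHom
      SemidirectProduct.rightHom_surjective _ hN₂ w
      (fun q hq => (mem_range_incl₂ H d α β w q).1 (Subgroup.map_le_range _ _ hq))
      _ (Subgroup.mem_map_of_mem _ hn)
    exact Subtype.ext this
  have hg : ∀ n ∈ N, n.left.1.g = 1 := by
    intro n hn
    exact eq_one_of_normal (Ω := Ω) (proj (β.comp (stabilizer R w).subtype))
      (proj_surjective H β _) _ hN₁ (p d)
      (fun q hq => (mem_range_incl₁ H d α β _ hS q).1 (Subgroup.map_le_range _ _ hq))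
      _ (Subgroup.mem_map_of_mem _ hn)
  -- the elements of `N` are closed under conjugation by `A`
  have hconj : ∀ n ∈ N, ∀ b : BlockExt K p X, ∃ n' ∈ N, n'.left.1 = b * n.left.1 * b⁻¹ := by
    intro n hn b
    obtain ⟨n', hn', h⟩ := hN₁.conj_mem _ (Subgroup.mem_map_of_mem _ hn) (SemidirectProduct.inl b)
    refine ⟨n', hn', ?_⟩
    have hr : (incl₁ H d α β _ hS n).right = 1 := hright n hn
    have hl : (incl₁ H d α β _ hS n).left = n.left.1 := rfl
    have := congrArg SemidirectProduct.left h
    simp only [SemidirectProduct.mul_left, SemidirectProduct.mul_right,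
      SemidirectProduct.left_inl, SemidirectProduct.right_inl, SemidirectProduct.inv_left, hr,
      hl, inv_one, map_one, mul_one, MulAut.one_apply] at this
    exact this
  -- and under the action of `R`
  have hact : ∀ n ∈ N, ∀ r : R, ∃ n' ∈ N, n'.left = shuffle H d (α r) (β r) n.left := by
    intro n hn r
    obtain ⟨n', hn', h⟩ := hN₂.conj_mem _ (Subgroup.mem_map_of_mem _ hn) (SemidirectProduct.inr r)
    refine ⟨n', hn', ?_⟩
    have := congrArg SemidirectProduct.left h
    simp only [SemidirectProduct.mul_left, SemidirectProduct.mul_right,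
      SemidirectProduct.left_inr, SemidirectProduct.right_inr, SemidirectProduct.inv_left,
      inv_one, map_one, mul_one, one_mul] at this
    exact this
  -- one vanishing block suffices, as `L` is transitive on blocks
  have hspread : ∀ (i : Option X) (δ : Δ), (∀ n ∈ N, ev n.left.1 i δ = 1) →
      ∀ n ∈ N, ∀ δ', ev n.left.1 i δ' = 1 := by
    intro i δ h n hn δ'
    cases i with
    | none => exact hg n hn
    | some i =>
      obtain ⟨l, hl⟩ := exists_smul_eq L δ' δ
      obtain ⟨b, rfl⟩ := exists_g (X := X) H l
      obtain ⟨n', hn', e⟩ := hconj n hn b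
      have h1 : n'.left.1.f i δ = 1 := h n' hn'
      have hinv : b.g⁻¹ • δ = δ' := by rw [← hl, inv_smul_smul]
      rw [e, mul_f, mul_f, inv_f, inv_g, hinv, hg n hn, one_smul] at h1
      exact conj_eq_one_iff.1 h1
  have hall : ∀ i : Option X, ∀ n ∈ N, ∀ δ, ev n.left.1 i δ = 1 := by
    refine hconn {i | ∀ n ∈ N, ∀ δ, ev n.left.1 i δ = 1} (fun n hn _ => hg n hn) ?_ ?_
    · intro r i hi
      refine hspread _ d fun n hn => ?_
      obtain ⟨n', hn', e⟩ := hact n hn r⁻¹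
      have := hi n' hn' d
      rw [e, ev_shuffle, map_inv, inv_inv] at this
      exact this
    · intro r i hi
      obtain ⟨δ, hδ⟩ := exists_ne d
      refine hspread _ δ fun n hn => ?_
      obtain ⟨n', hn', e⟩ := hact n hn r⁻¹
      have h1 : n'.left.1.f i δ = 1 := hi n' hn' δ
      rw [e, f_shuffle _ _ _ _ _ _ hδ, map_inv, inv_inv] at h1
      exact h1
  rw [eq_bot_iff]
  intro n hn
  refine Subgroup.mem_bot.2 (SemidirectProduct.ext (Subtype.ext ?_) (hright n hn))
  ext i δ
  · exact hg n hn
  · exact hall (some i) n hn δ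

end BlockExt

end Amalgam

/-! ### The permutations of the coordinates -/

/-- `R` acting on the first component of `Ω' × J`. -/
def rowHom (R Ω' J : Type) [Group R] [MulAction R Ω'] : R →* Equiv.Perm (Ω' × J) where
  toFun r := (toPerm r).prodCongr (Equiv.refl J)
  map_one' := by ext <;> simp
  map_mul' r s := by ext <;> simp [mul_smul]

lemma rowHom_apply {R Ω' J : Type} [Group R] [MulAction R Ω'] (r : R) (x : Ω') (j : J) :
    rowHom R Ω' J r (x, j) = (r • x, j) := rfl

/-- There is a permutation `t` of `Option (Ω' × Fin (n + 1))` that cycles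
`none, (w, n), (w, n - 1), …, (w, 0)` and fixes the other points. -/
lemma exists_shift {Ω' : Type} [Finite Ω'] (w : Ω') (n : ℕ) :
    ∃ t : Equiv.Perm (Option (Ω' × Fin (n + 1))),
      t none = some (w, Fin.last n) ∧ t (some (w, 0)) = none ∧
      (∀ j : Fin n, t (some (w, j.succ)) = some (w, j.castSucc)) ∧
      ∀ x j, x ≠ w → t (some (x, j)) = some (x, j) := by
  classical
  let F : Option (Ω' × Fin (n + 1)) → Option (Ω' × Fin (n + 1)) := fun o => match o with
    | none => some (w, Fin.last n)
    | some (x, j) => if x = w then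
        (Fin.cases none (fun k : Fin n => some (w, k.castSucc)) j :
          Option (Ω' × Fin (n + 1))) else some (x, j)
  have h1 : F (some (w, 0)) = none := by simp [F]
  have h2 : ∀ j : Fin n, F (some (w, j.succ)) = some (w, j.castSucc) := by simp [F]
  have h3 : ∀ x j, x ≠ w → F (some (x, j)) = some (x, j) := fun x j h => by simp [F, h]
  have h0 : F none = some (w, Fin.last n) := rfl
  have hF : Function.Surjective F := by
    rintro (_ | ⟨x, j⟩)
    · exact ⟨some (w, 0), h1⟩
    · by_cases hx : x = w
      · subst hx
        exact Fin.lastCases ⟨none, h0⟩ (fun k => ⟨some (x, k.succ), h2 k⟩) j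
      · exact ⟨some (x, j), h3 x j hx⟩
  exact ⟨Equiv.ofBijective F (Finite.surjective_iff_bijective.1 hF), h0, h1, h2, h3⟩

/-- The two actions of `R` on coordinates. The natural action `β` on rows moves `(v, j)` with
`v ≠ w` to `(w, j)`. Its conjugate `α` by the cycle of `exists_shift` moves `none` to the row `0`,
and `(w, j)` to the row `j + 1`, so that `none` is joined to all rows in turn. -/
lemma exists_actions (R Ω' : Type) [Group R] [MulAction R Ω'] [Finite Ω'] [IsPretransitive R Ω']
    [Nontrivial Ω'] (w : Ω') (n : ℕ) :
    ∃ (α : R →* Equiv.Perm (Option (Ω' × Fin (n + 1)))) (β : R →* Equiv.Perm (Ω' × Fin (n + 1))),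
      (∀ r ∈ stabilizer R w, α r = optHom _ (β r)) ∧
      ∀ T : Set (Option (Ω' × Fin (n + 1))), none ∈ T → (∀ r i, i ∈ T → α r i ∈ T) →
        (∀ r i, some i ∈ T → some (β r i) ∈ T) → ∀ i, i ∈ T := by
  obtain ⟨t, t0, t1, t2, t3⟩ := exists_shift w n
  refine ⟨(MulAut.conj t).toMonoidHom.comp ((optHom _).comp (rowHom R Ω' (Fin (n + 1)))),
    rowHom R Ω' (Fin (n + 1)), ?_, ?_⟩
  · intro r hr
    have hr : r • w = w := hr
    change t * optHom _ (rowHom R Ω' (Fin (n + 1)) r) * t⁻¹ = _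
    rw [mul_inv_eq_iff_eq_mul]
    have hn : ∀ ρ : Equiv.Perm (Ω' × Fin (n + 1)), optHom _ ρ none = none := fun _ => rfl
    have hs : ∀ x j, optHom _ (rowHom R Ω' (Fin (n + 1)) r) (some (x, j)) = some (r • x, j) :=
      fun _ _ => rfl
    ext1 o
    simp only [Equiv.Perm.mul_apply]
    rcases o with _ | ⟨x, j⟩
    · rw [hn, t0, hs, hr]
    · by_cases hx : x = w
      · subst hx
        rw [hs, hr]
        refine Fin.cases ?_ (fun k => ?_) j
        · rw [t1, hn]
        · rw [t2, hs, hr]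
      · have hx' : r • x ≠ w := fun h => hx (smul_left_cancel r (h.trans hr.symm))
        rw [hs, t3 _ _ hx, t3 _ _ hx', hs]
  · intro T hT hα hβ
    have hα' : ∀ (x y : Ω') (j), t (some (x, j)) ∈ T → t (some (y, j)) ∈ T := by
      intro x y j h
      obtain ⟨r, rfl⟩ := exists_smul_eq R x y
      have := hα r _ h
      change (t * optHom _ (rowHom R Ω' (Fin (n + 1)) r) * t⁻¹) (t (some (x, j))) ∈ T at this
      rw [Equiv.Perm.mul_apply, show t⁻¹ (t (some (x, j))) = some (x, j) from
        t.symm_apply_apply _] at this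
      exact this
    obtain ⟨v, hv⟩ := exists_ne w
    have hrow : ∀ j, t (some (w, j)) ∈ T → ∀ y, some (y, j) ∈ T := by
      intro j h y
      have := hα' w v j h
      rw [t3 _ _ hv] at this
      obtain ⟨r, rfl⟩ := exists_smul_eq R v y
      exact hβ r _ this
    have hj : ∀ j, t (some (w, j)) ∈ T := by
      intro j
      induction j using Fin.induction with
      | zero => rwa [t1]
      | succ k ih =>
        rw [t2]
        exact hrow _ ih w
    rintro (_ | ⟨y, j⟩)
    · exact hT
    · exact hrow j (hj j) y

/-! ### The block system of orbits -/

/-- The set of orbits of a normal subgroup `K` is a block system, and `Quotient.out` chooses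
representatives. -/
lemma exists_blockRep {L Ω : Type} [Group L] [MulAction L Ω] [IsPretransitive L Ω]
    (K : Subgroup L) (hKn : K.Normal) :
    ∃ (_ : MulAction L (orbitRel.Quotient K Ω)) (p : orbitRel.Quotient K Ω → Ω),
      IsPretransitive L (orbitRel.Quotient K Ω) ∧ BlockRep K p := by
  have hmk : ∀ x y : Ω, (Quotient.mk (orbitRel K Ω) x = Quotient.mk (orbitRel K Ω) y) ↔
      ∃ k ∈ K, k • y = x := by
    intro x y
    rw [Quotient.eq, orbitRel_apply, mem_orbit_iff]
    exact ⟨fun ⟨k, h⟩ => ⟨k, k.2, h⟩, fun ⟨k, hk, h⟩ => ⟨⟨k, hk⟩, h⟩⟩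
  let A : MulAction L (orbitRel.Quotient K Ω) :=
    { smul g := Quotient.map (fun x => g • x) (by
        intro x y h
        have h := Quotient.sound h
        rw [hmk] at h
        obtain ⟨k, hk, rfl⟩ := h
        apply Quotient.exact
        rw [hmk]
        exact ⟨g * k * g⁻¹, hKn.conj_mem k hk g, by simp [mul_smul]⟩)
      one_smul := by
        rintro ⟨x⟩
        exact congrArg (Quotient.mk _) (one_smul L x)
      mul_smul g h := by
        rintro ⟨x⟩
        exact congrArg (Quotient.mk _) (mul_smul g h x) }
  have hsmul : ∀ (g : L) (x : Ω),
      g • (Quotient.mk (orbitRel K Ω) x : orbitRel.Quotient K Ω) =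
        Quotient.mk (orbitRel K Ω) (g • x) := fun _ _ => rfl
  have hout : ∀ δ : orbitRel.Quotient K Ω, Quotient.mk (orbitRel K Ω) (Quotient.out δ) = δ :=
    Quotient.out_eq
  refine ⟨A, Quotient.out, ⟨?_⟩, ?_, ?_, ?_⟩
  · rintro ⟨x⟩ ⟨y⟩
    obtain ⟨g, rfl⟩ := exists_smul_eq L x y
    exact ⟨g, rfl⟩
  · rintro k hk ⟨x⟩
    exact (hmk _ _).2 ⟨k, hk, rfl⟩
  · intro g δ h
    conv_lhs => rw [← hout δ]
    rw [hsmul, h, hout]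
  · intro g δ
    apply (hmk _ _).1
    rw [hout, ← hsmul, hout]

end Construction

/-- Theorem 1.6 with the explicit bound from Section 3: if `L₁` (transitive of degree `m₁`,
acting on `Ω₁`) is not semiprimitive, witnessed by a normal subgroup `K` that is the kernel of
the action on its orbit set `Δ`, is not transitive, and has point stabiliser `K_λ` of order
`≥ 2`, and `L₂` is a nontrivial transitive group of degree `m₂ = |Ω₂|`, then for every `ℓ ≥ 1`
there is a rank-2 faithful amalgam `(P₁, P₂, B)` of permutation type `[L₁, L₂]` whose Borel
subgroup `B` satisfies `|B| ≥ 2^{|Δ|·ℓ·m₂}`; hence the Borel subgroups are unbounded. -/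
theorem stmt19 {L₁ L₂ Ω₁ Ω₂ : Type} [Group L₁] [Group L₂] [Fintype Ω₁] [Fintype Ω₂]
    [MulAction L₁ Ω₁] [MulAction L₂ Ω₂]
    [FaithfulSMul L₁ Ω₁] [FaithfulSMul L₂ Ω₂]
    [MulAction.IsPretransitive L₁ Ω₁] [MulAction.IsPretransitive L₂ Ω₂]
    [Nontrivial Ω₁] [Nontrivial Ω₂] [Finite L₁] [Finite L₂]
    (K : Subgroup L₁) (hKn : K.Normal)
    (hKnt : ¬ ∀ x y : Ω₁, ∃ k ∈ K, k • x = y)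
    (hker : ∀ g : L₁, g ∈ K ↔ ∀ x : Ω₁, g • x ∈ MulAction.orbit K x)
    (lam : Ω₁) (hstab : 2 ≤ Nat.card {k : L₁ // k ∈ K ∧ k • lam = lam}) :
    ∀ ℓ : ℕ, 0 < ℓ →
      ∃ (P₁ P₂ B : Type) (gP₁ : Group P₁) (gP₂ : Group P₂) (gB : Group B) (fB : Fintype B)
        (i₁ : B →* P₁) (i₂ : B →* P₂),
        Function.Injective i₁ ∧ Function.Injective i₂ ∧ Finite P₁ ∧ Finite P₂ ∧
        (∀ N : Subgroup B, (N.map i₁).Normal → (N.map i₂).Normal → N = ⊥) ∧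
        (∃ (e : (P₁ ⧸ i₁.range) ≃ Ω₁) (ψ : P₁ →* L₁), Function.Surjective ψ ∧
          ∀ (p : P₁) (x : P₁ ⧸ i₁.range), e (p • x) = ψ p • e x) ∧
        (∃ (e : (P₂ ⧸ i₂.range) ≃ Ω₂) (ψ : P₂ →* L₂), Function.Surjective ψ ∧
          ∀ (p : P₂) (x : P₂ ⧸ i₂.range), e (p • x) = ψ p • e x) ∧
        2 ^ (Nat.card (MulAction.orbitRel.Quotient K Ω₁) * ℓ * Fintype.card Ω₂) ≤
          Nat.card B := by
  intro ℓ hℓ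
  obtain ⟨n, rfl⟩ : ∃ n, ℓ = n + 1 := ⟨ℓ - 1, by omega⟩
  obtain ⟨_, p, hΔ, H⟩ := exists_blockRep (Ω := Ω₁) K hKn
  have hnt : Nontrivial (MulAction.orbitRel.Quotient K Ω₁) := by
    by_contra hc
    rw [not_nontrivial_iff_subsingleton] at hc
    refine hKnt fun x y => ?_
    have : (Quotient.mk (MulAction.orbitRel K Ω₁) y) = Quotient.mk (MulAction.orbitRel K Ω₁) x :=
      Subsingleton.elim (α := MulAction.orbitRel.Quotient K Ω₁) _ _
    obtain ⟨k, hk⟩ := Quotient.exact this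
    exact ⟨k, k.2, hk⟩
  have hfΔ : Finite (MulAction.orbitRel.Quotient K Ω₁) := Quotient.finite _
  -- point stabilisers in `K` are conjugate in `L₁`, so all of them are nontrivial
  have hK : ∀ δ, ∃ k ∈ K, k • p δ = p δ ∧ k ≠ 1 := by
    intro δ
    have : Nontrivial {k : L₁ // k ∈ K ∧ k • lam = lam} :=
      Finite.one_lt_card_iff_nontrivial.1 hstab
    obtain ⟨⟨k, hk, hkl⟩, hne⟩ := exists_ne
      (⟨1, K.one_mem, one_smul _ _⟩ : {k : L₁ // k ∈ K ∧ k • lam = lam})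
    obtain ⟨g, hgl⟩ := MulAction.exists_smul_eq L₁ lam (p δ)
    refine ⟨g * k * g⁻¹, hKn.conj_mem k hk g, ?_, fun h => hne (Subtype.ext ?_)⟩
    · rw [← hgl, mul_smul, inv_smul_smul, mul_smul, hkl]
    · exact conj_eq_one_iff.1 h
  obtain ⟨d⟩ : Nonempty (MulAction.orbitRel.Quotient K Ω₁) := inferInstance
  obtain ⟨w⟩ : Nonempty Ω₂ := inferInstance
  obtain ⟨α, β, hS, hconn⟩ := exists_actions L₂ Ω₂ w n
  have hfA : Finite (BlockExt K p (Ω₂ × Fin (n + 1))) := BlockExt.finite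
  have hfP₁ : Finite (BlockExt K p (Ω₂ × Fin (n + 1))
      ⋊[(BlockExt.reindex K p _).comp (β.comp (MulAction.stabilizer L₂ w).subtype)]
        MulAction.stabilizer L₂ w) := Finite.of_equiv _ SemidirectProduct.equivProd.symm
  have hfP₂ : Finite (BlockExt.pstab K p (Ω₂ × Fin (n + 1)) d ⋊[BlockExt.act H d α β] L₂) :=
    Finite.of_equiv _ SemidirectProduct.equivProd.symm
  refine ⟨_, _, _, _, _, _,
    @Fintype.ofFinite _ (Finite.of_injective _ (BlockExt.incl₁_injective H d α β _ hS)),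
    BlockExt.incl₁ H d α β (MulAction.stabilizer L₂ w) hS,
    BlockExt.incl₂ H d α β (MulAction.stabilizer L₂ w),
    BlockExt.incl₁_injective H d α β _ hS, BlockExt.incl₂_injective H d α β _, hfP₁, hfP₂,
    BlockExt.faithful H d α β w hS hconn, ?_, ?_, ?_⟩
  · obtain ⟨e, he⟩ := exists_coset_equiv _ (BlockExt.proj_surjective H β _) _ (p d)
      (BlockExt.mem_range_incl₁ H d α β (MulAction.stabilizer L₂ w) hS)
    exact ⟨e, _, BlockExt.proj_surjective H β _, he⟩
  · obtain ⟨e, he⟩ := exists_coset_equiv _ SemidirectProduct.rightHom_surjective _ w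
      (BlockExt.mem_range_incl₂ H d α β w)
    exact ⟨e, _, SemidirectProduct.rightHom_surjective, he⟩
  · have h := BlockExt.two_pow_le_card (X := Ω₂ × Fin (n + 1)) (d := d) hK
    have hX : Nat.card (Ω₂ × Fin (n + 1)) = (n + 1) * Fintype.card Ω₂ := by
      rw [Nat.card_prod, Nat.card_fin, Nat.card_eq_fintype_card, mul_comm]
    rw [hX, ← mul_assoc] at h
    rw [SemidirectProduct.card]
    exact h.trans (Nat.le_mul_of_pos_right _ Nat.card_pos)
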